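/- Let φ(x) = ST_22(I,x) for some modal intuitionistic formula I, let k = r(φ) be its degree, let Σ_φ ⊆ Θ, let (M₁,t) and (M₂,u) be pointed Θ-models, and let (A,B) be a (2,2)-modal ⟨(M₁,t),(M₂,u)⟩_l-asimulation. Then for all p,q ∈ {1,2}, every (m+1)-tuple (ā_m,a) of elements of M_p and every (m+1)-tuple (b̄_m,b) of elements of M_q: if (ā_m,a) A (b̄_m,b), m + k ≤ l, and M_p,a ⊨ φ(x), then M_q,b ⊨ φ(x). -/

import Mathlib

namespace ModalIntAsim

/-- Binary relation symbols of the correspondence vocabulary: R, R_□, R_◇. -/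
inductive RelSym : Type
  | r | box | diam
deriving DecidableEq

/-- Formulas of the correspondence language: classical first-order logic without
identity, with variables indexed by `ℕ`, unary predicate letters `P n` (n : ℕ),
and the three binary relation symbols. -/
inductive FOForm : Type
  | falsum : FOForm
  | pred : ℕ → ℕ → FOForm            -- `pred n v` is `P_n(x_v)`
  | rel : RelSym → ℕ → ℕ → FOForm    -- `rel s v w` is `S(x_v, x_w)`
  | conj : FOForm → FOForm → FOForm
  | disj : FOForm → FOForm → FOForm
  | impl : FOForm → FOForm → FOForm
  | all : ℕ → FOForm → FOForm
  | ex : ℕ → FOForm → FOForm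

namespace FOForm

/-- Free variables of a correspondence formula. -/
def freeVars : FOForm → Finset ℕ
  | falsum => ∅
  | pred _ v => {v}
  | rel _ v w => {v, w}
  | conj f g => f.freeVars ∪ g.freeVars
  | disj f g => f.freeVars ∪ g.freeVars
  | impl f g => f.freeVars ∪ g.freeVars
  | all v f => f.freeVars \ {v}
  | ex v f => f.freeVars \ {v}

/-- The unary predicate letters occurring in a formula (the binary relation
symbols R, R_□, R_◇ are regarded as belonging to every vocabulary Σ_φ). -/
def predLetters : FOForm → Finset ℕ
  | falsum => ∅
  | pred n _ => {n}
  | rel _ _ _ => ∅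
  | conj f g => f.predLetters ∪ g.predLetters
  | disj f g => f.predLetters ∪ g.predLetters
  | impl f g => f.predLetters ∪ g.predLetters
  | all _ f => f.predLetters
  | ex _ f => f.predLetters

/-- Degree of a formula: the greatest number of nested quantifiers. -/
def degree : FOForm → ℕ
  | falsum => 0
  | pred _ _ => 0
  | rel _ _ _ => 0
  | conj f g => max f.degree g.degree
  | disj f g => max f.degree g.degree
  | impl f g => max f.degree g.degree
  | all _ f => f.degree + 1
  | ex _ f => f.degree + 1

end FOForm

/-- A model of the correspondence language: a domain together with
interpretations of R, R_□, R_◇ and of the unary predicate letters.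
(A Θ-model only consults the letters in Θ.) -/
structure Model : Type 1 where
  U : Type
  rel : U → U → Prop
  relBox : U → U → Prop
  relDiam : U → U → Prop
  pred : ℕ → U → Prop

/-- Interpretation of a binary relation symbol in a model. -/
def Model.relOf (M : Model) : RelSym → M.U → M.U → Prop
  | .r => M.rel
  | .box => M.relBox
  | .diam => M.relDiam

/-- Tarskian satisfaction of a formula in a model under an assignment. -/
def Sat (M : Model) : FOForm → (ℕ → M.U) → Prop
  | .falsum, _ => False
  | .pred n v, α => M.pred n (α v)
  | .rel s v w, α => M.relOf s (α v) (α w)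
  | .conj f g, α => Sat M f α ∧ Sat M g α
  | .disj f g, α => Sat M f α ∨ Sat M g α
  | .impl f g, α => Sat M f α → Sat M g α
  | .all v f, α => ∀ u : M.U, Sat M f (Function.update α v u)
  | .ex v f, α => ∃ u : M.U, Sat M f (Function.update α v u)

/-- `M, a ⊨ φ(x)`: φ is true in `M` under any assignment sending `x` to `a`. -/
def SatAt (M : Model) (a : M.U) (x : ℕ) (φ : FOForm) : Prop :=
  ∀ α : ℕ → M.U, α x = a → Sat M φ α

/-- Logical equivalence of correspondence formulas. -/
def Equiv (φ ψ : FOForm) : Prop :=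
  ∀ (M : Model) (α : ℕ → M.U), Sat M φ α ↔ Sat M ψ α

/-- Logical entailment between correspondence formulas. -/
def Entails (φ ψ : FOForm) : Prop :=
  ∀ (M : Model) (α : ℕ → M.U), Sat M φ α → Sat M ψ α

/-- Modal intuitionistic formulas: built from propositional letters `p n`
using ⊥, ∧, ∨, →, □, ◇. -/
inductive MForm : Type
  | bot : MForm
  | prop : ℕ → MForm
  | conj : MForm → MForm → MForm
  | disj : MForm → MForm → MForm
  | impl : MForm → MForm → MForm
  | box : MForm → MForm
  | diam : MForm → MForm

/-- The (i,j)-standard x-translation `ST_ij`.  `boxOne = true` means the box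
clause (□₁) is used (i = 1), `boxOne = false` means (□₂) (i = 2); likewise
`diamOne = true` means the diamond clause (◇₁) (j = 1) and `diamOne = false`
means (◇₂) (j = 2).  Bound variables are chosen fresh as `x+1`, `x+2`. -/
def ST (boxOne diamOne : Bool) : MForm → ℕ → FOForm
  | .bot, _ => .falsum
  | .prop n, x => .pred n x
  | .conj I J, x => .conj (ST boxOne diamOne I x) (ST boxOne diamOne J x)
  | .disj I J, x => .disj (ST boxOne diamOne I x) (ST boxOne diamOne J x)
  | .impl I J, x =>
      .all (x + 1) (.impl (.rel .r x (x + 1))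
        (.impl (ST boxOne diamOne I (x + 1)) (ST boxOne diamOne J (x + 1))))
  | .box I, x =>
      if boxOne then
        .all (x + 1) (.impl (.rel .box x (x + 1)) (ST boxOne diamOne I (x + 1)))
      else
        .all (x + 1) (.impl (.rel .r x (x + 1))
          (.all (x + 2) (.impl (.rel .box (x + 1) (x + 2)) (ST boxOne diamOne I (x + 2)))))
  | .diam I, x =>
      if diamOne then
        .ex (x + 1) (.conj (.rel .diam x (x + 1)) (ST boxOne diamOne I (x + 1)))
      else
        .all (x + 1) (.impl (.rel .r x (x + 1))
          (.ex (x + 2) (.conj (.rel .diam (x + 1) (x + 2)) (ST boxOne diamOne I (x + 2)))))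

/-! ### Conditions on relations between tuples (the k-asimulation conditions).
A relation between the two models is represented by its two directed
components; `N` is the model of the source tuple and `P` that of the target
tuple.  A tuple `(ā_m, a)` is represented as the list `as ++ [a]`, with
`m = as.length`. -/

section TupleConds

variable (N P : Model)

/-- The "p-type" condition: related tuples are nonempty and of equal length. -/
def TypeCond (A : List N.U → List P.U → Prop) : Prop :=
  ∀ as bs, A as bs → as ≠ [] ∧ as.length = bs.length

/-- (p-base). -/
def BaseCond (Θ : Set ℕ) (A : List N.U → List P.U → Prop) : Prop :=
  ∀ (as : List N.U) (bs : List P.U) (a : N.U) (b : P.U),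
    A (as ++ [a]) (bs ++ [b]) → ∀ n ∈ Θ, N.pred n a → P.pred n b

/-- (p-step). -/
def StepCond (k : ℕ) (A : List N.U → List P.U → Prop)
    (Arev : List P.U → List N.U → Prop) : Prop :=
  ∀ (as : List N.U) (bs : List P.U) (a : N.U) (b d : P.U),
    A (as ++ [a]) (bs ++ [b]) → P.rel b d → as.length < k →
    ∃ c : N.U, N.rel a c ∧ A (as ++ [a, c]) (bs ++ [b, d]) ∧
      Arev (bs ++ [b, d]) (as ++ [a, c])

/-- (p-box-1). -/
def Box1Cond (k : ℕ) (A : List N.U → List P.U → Prop) : Prop :=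
  ∀ (as : List N.U) (bs : List P.U) (a : N.U) (b d : P.U),
    A (as ++ [a]) (bs ++ [b]) → P.relBox b d → as.length < k →
    ∃ c : N.U, N.relBox a c ∧ A (as ++ [a, c]) (bs ++ [b, d])

/-- (p-box-2). -/
def Box2Cond (k : ℕ) (A : List N.U → List P.U → Prop) : Prop :=
  ∀ (as : List N.U) (bs : List P.U) (a : N.U) (b d f : P.U),
    A (as ++ [a]) (bs ++ [b]) → P.rel b d → P.relBox d f → as.length + 1 < k →
    ∃ c e : N.U, N.rel a c ∧ N.relBox c e ∧ A (as ++ [a, c, e]) (bs ++ [b, d, f])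

/-- (p-diam-1). -/
def Diam1Cond (k : ℕ) (A : List N.U → List P.U → Prop) : Prop :=
  ∀ (as : List N.U) (bs : List P.U) (a c : N.U) (b : P.U),
    A (as ++ [a]) (bs ++ [b]) → N.relDiam a c → as.length < k →
    ∃ d : P.U, P.relDiam b d ∧ A (as ++ [a, c]) (bs ++ [b, d])

/-- (p-diam-2(1)). -/
def Diam2aCond (k : ℕ) (A B : List N.U → List P.U → Prop) : Prop :=
  ∀ (as : List N.U) (bs : List P.U) (a : N.U) (b d : P.U),
    A (as ++ [a]) (bs ++ [b]) → P.rel b d → as.length + 1 < k →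
    ∃ c : N.U, N.rel a c ∧ B (as ++ [a, c]) (bs ++ [b, d])

/-- (p-diam-2(2)). -/
def Diam2bCond (k : ℕ) (B A : List N.U → List P.U → Prop) : Prop :=
  ∀ (as : List N.U) (bs : List P.U) (a c : N.U) (b : P.U),
    B (as ++ [a]) (bs ++ [b]) → N.relDiam a c → as.length < k →
    ∃ d : P.U, P.relDiam b d ∧ A (as ++ [a, c]) (bs ++ [b, d])

end TupleConds

/-- An (i,1)-modal ⟨(M₁,t),(M₂,u)⟩_k-asimulation (j = 1): a single relation `A`
given by its two directed components `A12`, `A21`. -/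
def IsKAsimD1 (boxOne : Bool) (Θ : Set ℕ) (M₁ M₂ : Model) (t : M₁.U) (u : M₂.U) (k : ℕ)
    (A12 : List M₁.U → List M₂.U → Prop) (A21 : List M₂.U → List M₁.U → Prop) : Prop :=
  TypeCond M₁ M₂ A12 ∧ TypeCond M₂ M₁ A21 ∧
  A12 [t] [u] ∧
  BaseCond M₁ M₂ Θ A12 ∧ BaseCond M₂ M₁ Θ A21 ∧
  StepCond M₁ M₂ k A12 A21 ∧ StepCond M₂ M₁ k A21 A12 ∧
  (if boxOne then Box1Cond M₁ M₂ k A12 ∧ Box1Cond M₂ M₁ k A21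
   else Box2Cond M₁ M₂ k A12 ∧ Box2Cond M₂ M₁ k A21) ∧
  Diam1Cond M₁ M₂ k A12 ∧ Diam1Cond M₂ M₁ k A21

/-- An (i,2)-modal ⟨(M₁,t),(M₂,u)⟩_k-asimulation (j = 2): an ordered pair
(A, B) of relations, each given by its two directed components. -/
def IsKAsimD2 (boxOne : Bool) (Θ : Set ℕ) (M₁ M₂ : Model) (t : M₁.U) (u : M₂.U) (k : ℕ)
    (A12 : List M₁.U → List M₂.U → Prop) (A21 : List M₂.U → List M₁.U → Prop)
    (B12 : List M₁.U → List M₂.U → Prop) (B21 : List M₂.U → List M₁.U → Prop) : Prop :=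
  TypeCond M₁ M₂ A12 ∧ TypeCond M₂ M₁ A21 ∧
  TypeCond M₁ M₂ B12 ∧ TypeCond M₂ M₁ B21 ∧
  A12 [t] [u] ∧
  BaseCond M₁ M₂ Θ A12 ∧ BaseCond M₂ M₁ Θ A21 ∧
  StepCond M₁ M₂ k A12 A21 ∧ StepCond M₂ M₁ k A21 A12 ∧
  (if boxOne then Box1Cond M₁ M₂ k A12 ∧ Box1Cond M₂ M₁ k A21
   else Box2Cond M₁ M₂ k A12 ∧ Box2Cond M₂ M₁ k A21) ∧
  Diam2aCond M₁ M₂ k A12 B12 ∧ Diam2aCond M₂ M₁ k A21 B21 ∧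
  Diam2bCond M₁ M₂ k B12 A12 ∧ Diam2bCond M₂ M₁ k B21 A21

/-- φ(x) is invariant with respect to (i,1)-modal k-asimulations. -/
def KInvariantD1 (boxOne : Bool) (x : ℕ) (φ : FOForm) (k : ℕ) : Prop :=
  ∀ Θ : Set ℕ, (φ.predLetters : Set ℕ) ⊆ Θ →
  ∀ (M₁ M₂ : Model) (t : M₁.U) (u : M₂.U)
    (A12 : List M₁.U → List M₂.U → Prop) (A21 : List M₂.U → List M₁.U → Prop),
    IsKAsimD1 boxOne Θ M₁ M₂ t u k A12 A21 →
    ∀ (a : M₁.U) (b : M₂.U), A12 [a] [b] → SatAt M₁ a x φ → SatAt M₂ b x φ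

/-- φ(x) is invariant with respect to (i,2)-modal k-asimulations. -/
def KInvariantD2 (boxOne : Bool) (x : ℕ) (φ : FOForm) (k : ℕ) : Prop :=
  ∀ Θ : Set ℕ, (φ.predLetters : Set ℕ) ⊆ Θ →
  ∀ (M₁ M₂ : Model) (t : M₁.U) (u : M₂.U)
    (A12 : List M₁.U → List M₂.U → Prop) (A21 : List M₂.U → List M₁.U → Prop)
    (B12 : List M₁.U → List M₂.U → Prop) (B21 : List M₂.U → List M₁.U → Prop),
    IsKAsimD2 boxOne Θ M₁ M₂ t u k A12 A21 B12 B21 →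
    ∀ (a : M₁.U) (b : M₂.U), A12 [a] [b] → SatAt M₁ a x φ → SatAt M₂ b x φ

/-! ### Conditions for asimulations *simpliciter* (relations between elements). -/

section ElemConds

variable (N P : Model)

/-- (base). -/
def BaseCondE (Θ : Set ℕ) (A : N.U → P.U → Prop) : Prop :=
  ∀ (a : N.U) (b : P.U), A a b → ∀ n ∈ Θ, N.pred n a → P.pred n b

/-- (step). -/
def StepCondE (A : N.U → P.U → Prop) (Arev : P.U → N.U → Prop) : Prop :=
  ∀ (a : N.U) (b d : P.U), A a b → P.rel b d →
    ∃ c : N.U, N.rel a c ∧ A c d ∧ Arev d c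

/-- (box-1). -/
def Box1CondE (A : N.U → P.U → Prop) : Prop :=
  ∀ (a : N.U) (b d : P.U), A a b → P.relBox b d →
    ∃ c : N.U, N.relBox a c ∧ A c d

/-- (box-2). -/
def Box2CondE (A : N.U → P.U → Prop) : Prop :=
  ∀ (a : N.U) (b d f : P.U), A a b → P.rel b d → P.relBox d f →
    ∃ c e : N.U, N.rel a c ∧ N.relBox c e ∧ A e f

/-- (diam-1). -/
def Diam1CondE (A : N.U → P.U → Prop) : Prop :=
  ∀ (a c : N.U) (b : P.U), A a b → N.relDiam a c →
    ∃ d : P.U, P.relDiam b d ∧ A c d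

/-- (diam-2(1)). -/
def Diam2aCondE (A B : N.U → P.U → Prop) : Prop :=
  ∀ (a : N.U) (b d : P.U), A a b → P.rel b d →
    ∃ c : N.U, N.rel a c ∧ B c d

/-- (diam-2(2)). -/
def Diam2bCondE (B A : N.U → P.U → Prop) : Prop :=
  ∀ (a c : N.U) (b : P.U), B a b → N.relDiam a c →
    ∃ d : P.U, P.relDiam b d ∧ A c d

end ElemConds

/-- An (i,1)-modal ⟨(M₁,t),(M₂,u)⟩-asimulation (j = 1). -/
def IsAsimD1 (boxOne : Bool) (Θ : Set ℕ) (M₁ M₂ : Model) (t : M₁.U) (u : M₂.U)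
    (A12 : M₁.U → M₂.U → Prop) (A21 : M₂.U → M₁.U → Prop) : Prop :=
  A12 t u ∧
  BaseCondE M₁ M₂ Θ A12 ∧ BaseCondE M₂ M₁ Θ A21 ∧
  StepCondE M₁ M₂ A12 A21 ∧ StepCondE M₂ M₁ A21 A12 ∧
  (if boxOne then Box1CondE M₁ M₂ A12 ∧ Box1CondE M₂ M₁ A21
   else Box2CondE M₁ M₂ A12 ∧ Box2CondE M₂ M₁ A21) ∧
  Diam1CondE M₁ M₂ A12 ∧ Diam1CondE M₂ M₁ A21

/-- An (i,2)-modal ⟨(M₁,t),(M₂,u)⟩-asimulation (j = 2). -/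
def IsAsimD2 (boxOne : Bool) (Θ : Set ℕ) (M₁ M₂ : Model) (t : M₁.U) (u : M₂.U)
    (A12 : M₁.U → M₂.U → Prop) (A21 : M₂.U → M₁.U → Prop)
    (B12 : M₁.U → M₂.U → Prop) (B21 : M₂.U → M₁.U → Prop) : Prop :=
  A12 t u ∧
  BaseCondE M₁ M₂ Θ A12 ∧ BaseCondE M₂ M₁ Θ A21 ∧
  StepCondE M₁ M₂ A12 A21 ∧ StepCondE M₂ M₁ A21 A12 ∧
  (if boxOne then Box1CondE M₁ M₂ A12 ∧ Box1CondE M₂ M₁ A21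
   else Box2CondE M₁ M₂ A12 ∧ Box2CondE M₂ M₁ A21) ∧
  Diam2aCondE M₁ M₂ A12 B12 ∧ Diam2aCondE M₂ M₁ A21 B21 ∧
  Diam2bCondE M₁ M₂ B12 A12 ∧ Diam2bCondE M₂ M₁ B21 A21

/-- φ(x) is invariant with respect to (i,1)-modal asimulations. -/
def InvariantD1 (boxOne : Bool) (x : ℕ) (φ : FOForm) : Prop :=
  ∀ Θ : Set ℕ, (φ.predLetters : Set ℕ) ⊆ Θ →
  ∀ (M₁ M₂ : Model) (t : M₁.U) (u : M₂.U)
    (A12 : M₁.U → M₂.U → Prop) (A21 : M₂.U → M₁.U → Prop),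
    IsAsimD1 boxOne Θ M₁ M₂ t u A12 A21 →
    ∀ (a : M₁.U) (b : M₂.U), A12 a b → SatAt M₁ a x φ → SatAt M₂ b x φ

/-- φ(x) is invariant with respect to (i,2)-modal asimulations. -/
def InvariantD2 (boxOne : Bool) (x : ℕ) (φ : FOForm) : Prop :=
  ∀ Θ : Set ℕ, (φ.predLetters : Set ℕ) ⊆ Θ →
  ∀ (M₁ M₂ : Model) (t : M₁.U) (u : M₂.U)
    (A12 : M₁.U → M₂.U → Prop) (A21 : M₂.U → M₁.U → Prop)
    (B12 : M₁.U → M₂.U → Prop) (B21 : M₂.U → M₁.U → Prop),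
    IsAsimD2 boxOne Θ M₁ M₂ t u A12 A21 B12 B21 →
    ∀ (a : M₁.U) (b : M₂.U), A12 a b → SatAt M₁ a x φ → SatAt M₂ b x φ

/-! ### Types, complete conjunctions, ω-saturation. -/

/-- `int(φ,x,l)`: the set of (2,2)-standard x-translations of modal
intuitionistic formulas which are (Σ_φ,x,l)-formulas. -/
def intSet (φ : FOForm) (x l : ℕ) : Set FOForm :=
  {ψ | (∃ I : MForm, ψ = ST false false I x) ∧
    ψ.predLetters ⊆ φ.predLetters ∧ ψ.freeVars ⊆ {x} ∧ ψ.degree ≤ l}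

/-- `tp_l(φ(x),M,a)`. -/
def tpSet (φ : FOForm) (x l : ℕ) (M : Model) (a : M.U) : Set FOForm :=
  {ψ | ψ ∈ intSet φ x l ∧ SatAt M a x ψ}

/-- Conjunction of a nonempty list of formulas. -/
def listConj : FOForm → List FOForm → FOForm
  | ψ, [] => ψ
  | ψ, χ :: L => FOForm.conj ψ (listConj χ L)

/-- Ψ(x) is a complete (φ,x,k)-conjunction. -/
def IsCompleteConj (φ : FOForm) (x k : ℕ) (Ψ : FOForm) : Prop :=
  (∃ (ψ₀ : FOForm) (L : List FOForm), ψ₀ ∈ intSet φ x k ∧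
    (∀ χ ∈ L, χ ∈ intSet φ x k) ∧ Ψ = listConj ψ₀ L) ∧
  ∃ (M : Model) (a : M.U), SatAt M a x (FOForm.conj Ψ φ) ∧
    ∀ ψ ∈ tpSet φ x k M a, Entails Ψ ψ

/-- `int_x(Θ)` for the (i,j)-standard translation. -/
def intX (Θ : Set ℕ) (boxOne diamOne : Bool) (x : ℕ) : Set FOForm :=
  {ψ | (∃ I : MForm, ψ = ST boxOne diamOne I x) ∧ (ψ.predLetters : Set ℕ) ⊆ Θ}

/-- `tp_x(M,t)` for the (i,j)-standard translation. -/
def tpX (Θ : Set ℕ) (boxOne diamOne : Bool) (x : ℕ) (M : Model) (t : M.U) : Set FOForm :=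
  {ψ | ψ ∈ intX Θ boxOne diamOne x ∧ SatAt M t x ψ}

/-- `imp_x(M,t) = ⋂ { t̄p_x(M,u) : t R_◇ u }` (for the (2,2)-translation). -/
def impX (Θ : Set ℕ) (x : ℕ) (M : Model) (t : M.U) : Set FOForm :=
  {ψ | ψ ∈ intX Θ false false x ∧ ∀ u : M.U, M.relDiam t u → ¬ SatAt M u x ψ}

/-- ω-saturation: for every finite tuple of parameters (the first `n` values of
an assignment `α`) and every set `Γ` of formulas with finitely many free
variables beyond the parameters, if `Γ` is consistent with the first-order
theory of `[M,ā]` (i.e. satisfiable together with it in some model), then `Γ`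
is realized in `[M,ā]`. -/
def OmegaSaturated (M : Model) : Prop :=
  ∀ (n : ℕ) (α : ℕ → M.U) (Γ : Set FOForm),
    (∃ k : ℕ, ∀ γ ∈ Γ, γ.freeVars ⊆ Finset.range (n + k)) →
    (∃ (N : Model) (β : ℕ → N.U),
      (∀ ψ : FOForm, ψ.freeVars ⊆ Finset.range n → Sat M ψ α → Sat N ψ β) ∧
      ∀ γ ∈ Γ, Sat N γ β) →
    ∃ α' : ℕ → M.U, (∀ i < n, α' i = α i) ∧ ∀ γ ∈ Γ, Sat M γ α'

/-! ### Relativization to a class κ of models. -/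

/-- κ(Θ) is first-order axiomatizable for every finite Θ (with R ∈ Θ): for
every finite set `S` of unary predicate letters there is a set of Θ-sentences
axiomatizing membership in κ. -/
def FinAxiomatizable (κ : Set Model) : Prop :=
  ∀ S : Finset ℕ, ∃ Ax : Set FOForm,
    (∀ ψ ∈ Ax, ψ.freeVars = ∅ ∧ (ψ.predLetters : Set ℕ) ⊆ (S : Set ℕ)) ∧
    ∀ M : Model, M ∈ κ ↔ ∀ ψ ∈ Ax, ∀ α : ℕ → M.U, Sat M ψ α

/-- φ κ-follows from ψ: {ψ, ¬φ} is not κ-satisfiable. -/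
def KappaFollows (κ : Set Model) (ψ φ : FOForm) : Prop :=
  ¬ ∃ M : Model, M ∈ κ ∧ ∃ α : ℕ → M.U, Sat M ψ α ∧ ¬ Sat M φ α

/-- κ-equivalence of formulas. -/
def KappaEquiv (κ : Set Model) (φ ψ : FOForm) : Prop :=
  KappaFollows κ φ ψ ∧ KappaFollows κ ψ φ

/-- φ(x) is κ-invariant with respect to (i,1)-modal asimulations. -/
def KappaInvariantD1 (κ : Set Model) (boxOne : Bool) (x : ℕ) (φ : FOForm) : Prop :=
  ∀ Θ : Set ℕ, (φ.predLetters : Set ℕ) ⊆ Θ →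
  ∀ (M₁ M₂ : Model), M₁ ∈ κ → M₂ ∈ κ →
  ∀ (t : M₁.U) (u : M₂.U)
    (A12 : M₁.U → M₂.U → Prop) (A21 : M₂.U → M₁.U → Prop),
    IsAsimD1 boxOne Θ M₁ M₂ t u A12 A21 →
    ∀ (a : M₁.U) (b : M₂.U), A12 a b → SatAt M₁ a x φ → SatAt M₂ b x φ

/-- φ(x) is κ-invariant with respect to (i,2)-modal asimulations. -/
def KappaInvariantD2 (κ : Set Model) (boxOne : Bool) (x : ℕ) (φ : FOForm) : Prop :=
  ∀ Θ : Set ℕ, (φ.predLetters : Set ℕ) ⊆ Θ →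
  ∀ (M₁ M₂ : Model), M₁ ∈ κ → M₂ ∈ κ →
  ∀ (t : M₁.U) (u : M₂.U)
    (A12 : M₁.U → M₂.U → Prop) (A21 : M₂.U → M₁.U → Prop)
    (B12 : M₁.U → M₂.U → Prop) (B21 : M₂.U → M₁.U → Prop),
    IsAsimD2 boxOne Θ M₁ M₂ t u A12 A21 B12 B21 →
    ∀ (a : M₁.U) (b : M₂.U), A12 a b → SatAt M₁ a x φ → SatAt M₂ b x φ

/-- φ(x) is κ-invariant with respect to (i,j)-modal asimulations
(`diamOne = true` means j = 1). -/
def KappaInvariant (κ : Set Model) (boxOne diamOne : Bool) (x : ℕ) (φ : FOForm) : Prop :=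
  if diamOne then KappaInvariantD1 κ boxOne x φ else KappaInvariantD2 κ boxOne x φ


/-- Direct semantics matching the (2,2)-translation. -/
def MSat (M : Model) : MForm → M.U → Prop
  | .bot, _ => False
  | .prop n, a => M.pred n a
  | .conj I J, a => MSat M I a ∧ MSat M J a
  | .disj I J, a => MSat M I a ∨ MSat M J a
  | .impl I J, a => ∀ c, M.rel a c → MSat M I c → MSat M J c
  | .box I, a => ∀ c, M.rel a c → ∀ e, M.relBox c e → MSat M I e
  | .diam I, a => ∀ c, M.rel a c → ∃ e, M.relDiam c e ∧ MSat M I e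

theorem sat_ST (M : Model) (I : MForm) : ∀ (x : ℕ) (α : ℕ → M.U),
    Sat M (ST false false I x) α ↔ MSat M I (α x) := by
  induction I with
  | bot => intro x α; simp [ST, Sat, MSat]
  | prop n => intro x α; simp [ST, Sat, MSat]
  | conj I J hI hJ => intro x α; simp [ST, Sat, MSat, hI, hJ]
  | disj I J hI hJ => intro x α; simp [ST, Sat, MSat, hI, hJ]
  | impl I J hI hJ => intro x α; simp [ST, Sat, MSat, hI, hJ, Model.relOf]
  | box I hI => intro x α; simp [ST, Sat, MSat, hI, Model.relOf]
  | diam I hI => intro x α; simp [ST, Sat, MSat, hI, Model.relOf]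

theorem satAt_ST (M : Model) (I : MForm) (x : ℕ) (a : M.U) :
    SatAt M a x (ST false false I x) ↔ MSat M I a := by
  constructor
  · intro h
    exact (sat_ST M I x (fun _ => a)).1 (h _ rfl)
  · rintro h α rfl
    exact (sat_ST M I x α).2 h

/-- Transfer of `I` along tuples related by `A`, with `k` spare steps below `l`. -/
def Transfer (N P : Model) (l k : ℕ) (A : List N.U → List P.U → Prop) (I : MForm) : Prop :=
  ∀ (as : List N.U) (bs : List P.U) (a : N.U) (b : P.U),
    A (as ++ [a]) (bs ++ [b]) → as.length + k ≤ l → MSat N I a → MSat P I b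

theorem Transfer.mono {N P : Model} {l k k' : ℕ} {A : List N.U → List P.U → Prop} {I : MForm}
    (h : Transfer N P l k A I) (hk : k ≤ k') : Transfer N P l k' A I :=
  fun as bs a b hA hl => h as bs a b hA (by omega)

theorem transfer_impl {N P : Model} {l k : ℕ} {A : List N.U → List P.U → Prop}
    {A' : List P.U → List N.U → Prop} {I J : MForm} (hl : TypeCond N P A)
    (hs : StepCond N P l A A') (hI : Transfer P N l k A' I) (hJ : Transfer N P l k A J) :
    Transfer N P l (k + 1) A (.impl I J) := by
  intro as bs a b hA hk h d hd hId
  obtain ⟨c, hc, h1, h2⟩ := hs as bs a b d hA hd (by omega)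
  have hlen := (hl _ _ hA).2
  simp only [List.length_append, List.length_cons, List.length_nil] at hlen
  refine hJ (as ++ [a]) (bs ++ [b]) c d (by simpa using h1) (by simp; omega) (h c hc ?_)
  exact hI (bs ++ [b]) (as ++ [a]) d c (by simpa using h2) (by simp; omega) hId

theorem transfer_box {N P : Model} {l k : ℕ} {A : List N.U → List P.U → Prop} {I : MForm}
    (hs : Box2Cond N P l A) (hI : Transfer N P l k A I) :
    Transfer N P l (k + 2) A (.box I) := by
  intro as bs a b hA hk h d hd f hf
  obtain ⟨c, e, hc, he, h1⟩ := hs as bs a b d f hA hd hf (by omega)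
  exact hI (as ++ [a, c]) (bs ++ [b, d]) e f (by simpa using h1) (by simp; omega) (h c hc e he)

theorem transfer_diam {N P : Model} {l k : ℕ} {A B : List N.U → List P.U → Prop} {I : MForm}
    (hs : Diam2aCond N P l A B) (hs' : Diam2bCond N P l B A) (hI : Transfer N P l k A I) :
    Transfer N P l (k + 2) A (.diam I) := by
  intro as bs a b hA hk h d hd
  obtain ⟨c, hc, h1⟩ := hs as bs a b d hA hd (by omega)
  obtain ⟨e, he, hIe⟩ := h c hc
  obtain ⟨f, hf, h2⟩ := hs' (as ++ [a]) (bs ++ [b]) c e d (by simpa using h1) he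
    (by simp; omega)
  exact ⟨f, hf, hI (as ++ [a, c]) (bs ++ [b, d]) e f (by simpa using h2) (by simp; omega) hIe⟩

theorem transfer_main (Θ : Set ℕ) (M₁ M₂ : Model) (t : M₁.U) (u : M₂.U) (l : ℕ)
    (A12 : List M₁.U → List M₂.U → Prop) (A21 : List M₂.U → List M₁.U → Prop)
    (B12 : List M₁.U → List M₂.U → Prop) (B21 : List M₂.U → List M₁.U → Prop)
    (hasim : IsKAsimD2 false Θ M₁ M₂ t u l A12 A21 B12 B21) (I : MForm) :
    ∀ x : ℕ, ((ST false false I x).predLetters : Set ℕ) ⊆ Θ →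
      Transfer M₁ M₂ l (ST false false I x).degree A12 I ∧
      Transfer M₂ M₁ l (ST false false I x).degree A21 I := by
  obtain ⟨ht1, ht2, -, -, -, hb1, hb2, hs1, hs2, hbox, ha1, ha2, hd1, hd2⟩ := hasim
  simp only [Bool.false_eq_true, if_false] at hbox
  induction I with
  | bot => exact fun x _ => ⟨fun _ _ _ _ _ _ h => h, fun _ _ _ _ _ _ h => h⟩
  | prop n =>
    intro x hx
    have hn : n ∈ Θ := hx (by simp [ST, FOForm.predLetters])
    exact ⟨fun as bs a b hA _ h => hb1 as bs a b hA n hn h,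
      fun as bs a b hA _ h => hb2 as bs a b hA n hn h⟩
  | conj I J hI hJ =>
    intro x hx
    simp only [ST, FOForm.predLetters, Finset.coe_union, Set.union_subset_iff] at hx
    obtain ⟨i1, i2⟩ := hI x hx.1
    obtain ⟨j1, j2⟩ := hJ x hx.2
    exact ⟨fun as bs a b hA hk h =>
        ⟨i1.mono (le_max_left _ _) as bs a b hA hk h.1,
          j1.mono (le_max_right _ _) as bs a b hA hk h.2⟩,
      fun as bs a b hA hk h =>
        ⟨i2.mono (le_max_left _ _) as bs a b hA hk h.1,
          j2.mono (le_max_right _ _) as bs a b hA hk h.2⟩⟩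
  | disj I J hI hJ =>
    intro x hx
    simp only [ST, FOForm.predLetters, Finset.coe_union, Set.union_subset_iff] at hx
    obtain ⟨i1, i2⟩ := hI x hx.1
    obtain ⟨j1, j2⟩ := hJ x hx.2
    exact ⟨fun as bs a b hA hk h => Or.imp
        (i1.mono (le_max_left _ _) as bs a b hA hk)
        (j1.mono (le_max_right _ _) as bs a b hA hk) h,
      fun as bs a b hA hk h => Or.imp
        (i2.mono (le_max_left _ _) as bs a b hA hk)
        (j2.mono (le_max_right _ _) as bs a b hA hk) h⟩
  | impl I J hI hJ =>
    intro x hx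
    simp only [ST, FOForm.predLetters, Finset.coe_union, Set.union_subset_iff] at hx
    obtain ⟨i1, i2⟩ := hI (x + 1) hx.2.1
    obtain ⟨j1, j2⟩ := hJ (x + 1) hx.2.2
    simp only [ST, FOForm.degree, Nat.zero_max]
    exact ⟨transfer_impl ht1 hs1 (i2.mono (le_max_left _ _)) (j1.mono (le_max_right _ _)),
      transfer_impl ht2 hs2 (i1.mono (le_max_left _ _)) (j2.mono (le_max_right _ _))⟩
  | box I hI =>
    intro x hx
    simp [ST, FOForm.predLetters] at hx
    obtain ⟨i1, i2⟩ := hI (x + 2) hx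
    simp only [ST, FOForm.degree, Nat.zero_max, Bool.false_eq_true, if_false]
    exact ⟨transfer_box hbox.1 i1, transfer_box hbox.2 i2⟩
  | diam I hI =>
    intro x hx
    simp [ST, FOForm.predLetters] at hx
    obtain ⟨i1, i2⟩ := hI (x + 2) hx
    simp only [ST, FOForm.degree, Nat.zero_max, Bool.false_eq_true, if_false]
    exact ⟨transfer_diam ha1 hd1 i1, transfer_diam ha2 hd2 i2⟩

/-- **Key Lemma 1 (case (2,2)).**  If φ(x) = ST₂₂(I,x), k = r(φ), Σ_φ ⊆ Θ and
(A,B) is a (2,2)-modal ⟨(M₁,t),(M₂,u)⟩_l-asimulation, then for all sides p,q,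
all (m+1)-tuples (ā_m,a) over M_p and (b̄_m,b) over M_q with (ā_m,a) A (b̄_m,b)
and m + k ≤ l: M_p,a ⊨ φ(x) implies M_q,b ⊨ φ(x). -/
theorem statement_8 (I : MForm) (x : ℕ) (φ : FOForm) (hφ : φ = ST false false I x)
    (k : ℕ) (hk : k = φ.degree)
    (Θ : Set ℕ) (hΘ : (φ.predLetters : Set ℕ) ⊆ Θ)
    (M₁ M₂ : Model) (t : M₁.U) (u : M₂.U) (l : ℕ)
    (A12 : List M₁.U → List M₂.U → Prop) (A21 : List M₂.U → List M₁.U → Prop)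
    (B12 : List M₁.U → List M₂.U → Prop) (B21 : List M₂.U → List M₁.U → Prop)
    (hasim : IsKAsimD2 false Θ M₁ M₂ t u l A12 A21 B12 B21) :
    (∀ (as : List M₁.U) (bs : List M₂.U) (a : M₁.U) (b : M₂.U),
      as.length = bs.length → A12 (as ++ [a]) (bs ++ [b]) → as.length + k ≤ l →
      SatAt M₁ a x φ → SatAt M₂ b x φ) ∧
    (∀ (as : List M₂.U) (bs : List M₁.U) (a : M₂.U) (b : M₁.U),
      as.length = bs.length → A21 (as ++ [a]) (bs ++ [b]) → as.length + k ≤ l →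
      SatAt M₂ a x φ → SatAt M₁ b x φ) := by
  subst hφ hk
  obtain ⟨h1, h2⟩ := transfer_main Θ M₁ M₂ t u l A12 A21 B12 B21 hasim I x hΘ
  simp only [satAt_ST]
  exact ⟨fun as bs a b _ => h1 as bs a b, fun as bs a b _ => h2 as bs a b⟩

end ModalIntAsim
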